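/- Let G be a 2-connected graph on n vertices with minimum degree δ ≥ (n+2)/3. Then every longest cycle in G is a dominating cycle, i.e., every edge of G has at least one endpoint on the cycle. -/

import Mathlib

open SimpleGraph

variable {V : Type*}

/-- `G` is `k`-connected: more than `k` vertices and removing fewer than `k`
vertices leaves a connected graph. -/
def KConnected (G : SimpleGraph V) [Fintype V] (k : ℕ) : Prop :=
  k < Fintype.card V ∧
    ∀ S : Finset V, S.card < k → (G.induce ((↑S : Set V)ᶜ)).Connected

/-- vertex connectivity `κ`. -/
noncomputable def connectivity (G : SimpleGraph V) [Fintype V] : ℕ :=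
  sSup {k | KConnected G k}

/-- independence number `α`. -/
noncomputable def indepNumber (G : SimpleGraph V) [Fintype V] : ℕ :=
  sSup {k | ∃ s : Finset V, (∀ u ∈ s, ∀ v ∈ s, ¬ G.Adj u v) ∧ s.card = k}

/-- circumference `c`: length of a longest cycle. -/
noncomputable def circumference (G : SimpleGraph V) [Fintype V] : ℕ :=
  sSup {n | ∃ (v : V) (w : G.Walk v v), w.IsCycle ∧ w.length = n}

/-- `w` is a longest cycle of `G`. -/
def IsLongestCycle {G : SimpleGraph V} {v : V} (w : G.Walk v v) : Prop :=
  w.IsCycle ∧ ∀ (u : V) (w' : G.Walk u u), w'.IsCycle → w'.length ≤ w.length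

/-- dominating cycle: every edge has an endpoint on the cycle. -/
def IsDominatingCycle {G : SimpleGraph V} {v : V} (w : G.Walk v v) : Prop :=
  w.IsCycle ∧ ∀ x y, G.Adj x y → x ∈ w.support ∨ y ∈ w.support

/-- generalized cycle of length `n` with vertex set `W`: single vertices are
cycles of length 1, edges are cycles of length 2. -/
def ExtCycle (G : SimpleGraph V) (W : Set V) (n : ℕ) : Prop :=
  (n = 1 ∧ ∃ v : V, W = {v}) ∨
  (n = 2 ∧ ∃ u v : V, G.Adj u v ∧ W = {u, v}) ∨
  (3 ≤ n ∧ ∃ (v : V) (w : G.Walk v v), w.IsCycle ∧ w.length = n ∧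
      W = {x | x ∈ w.support})

/-- `p̄`: the length of a longest path in `G \ C`. -/
noncomputable def pathBar (G : SimpleGraph V) [Fintype V] {v : V} (w : G.Walk v v) : ℕ :=
  sSup {n | ∃ (a b : {x : V | x ∉ w.support})
      (p : (G.induce {x : V | x ∉ w.support}).Walk a b), p.IsPath ∧ p.length = n}

/-- `c̄`: the length of a longest (generalized) cycle in `G \ C`. -/
noncomputable def cycBar (G : SimpleGraph V) [Fintype V] {v : V} (w : G.Walk v v) : ℕ :=
  sSup {n | ∃ W, ExtCycle (G.induce {x : V | x ∉ w.support}) W n}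

/-- `CD_m`-cycle: every (generalized) cycle of length at least `m` meets `w`. -/
def IsCDCycle (G : SimpleGraph V) {v : V} (w : G.Walk v v) (m : ℕ) : Prop :=
  w.IsCycle ∧ ∀ (W : Set V) (n : ℕ), ExtCycle G W n → m ≤ n → ∃ x ∈ W, x ∈ w.support

/-!
Suppose a longest cycle `C`, of length `c`, misses an edge. A maximal path off `C` containing that
edge has ends `x` and `y` whose neighbours all lie on the path or on `C`. Neighbours of `x` on `C`
are at least two apart, and one of `x` and one of `y` are separated by more than the length of the
path, as otherwise the cycle could be lengthened. Counting positions along `C` gives `c ≤ 2δ - 2`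
once `n + 2 ≤ 3δ`.

On the other hand `c ≥ 2δ - 1`. Extend a path leaving `C` from a vertex `a` through the missed edge
until all neighbours of its last vertex `y` lie on it or on `C`. If `y` has a neighbour on `C` other
than `a`, the same counting applies. If not, all neighbours of `y` lie on the path. Let `d` be the
first of them; the part from `d` to `y` can be shortcut, as in Dirac's theorem, to a path of length
at least `deg y` from `d` to any other of its vertices, and since no vertex separates this part
from an edge of `C`, such a path extends to an ear of `C` of length at least `δ`; an ear of a
longest cycle is at most half as long as the cycle.
-/

section Paths

variable {G : SimpleGraph V} {u v x : V}

lemma isPath_append_iff {p : G.Walk u v} {q : G.Walk v x} :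
    (p.append q).IsPath ↔
      p.IsPath ∧ q.IsPath ∧ ∀ z ∈ p.support, z ∈ q.support → z = v := by
  refine ⟨fun h ↦ ⟨h.of_append_left, h.of_append_right, fun z hp hq ↦ ?_⟩,
    fun ⟨hp, hq, h⟩ ↦ ?_⟩
  · by_contra hz
    exact h.ne_of_mem_support_of_append hz hp hq rfl
  · have hv : v ∉ q.support.tail :=
      (List.nodup_cons.1 (q.cons_tail_support.symm ▸ hq.support_nodup)).1
    rw [Walk.isPath_def, Walk.support_append, List.nodup_append']
    refine ⟨hp.support_nodup, hq.support_nodup.tail, fun z hzp hzq ↦ hv ?_⟩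
    exact h z hzp (List.mem_of_mem_tail hzq) ▸ hzq

lemma isCycle_append {p : G.Walk u v} {q : G.Walk v u} (hp : p.IsPath) (hq : q.IsPath)
    (hl : 1 < p.length) (h : ∀ z ∈ p.support, z ∈ q.support → z = u ∨ z = v) :
    (p.append q).IsCycle := by
  refine hp.isCycle_append hq (fun z hzp hzq ↦ ?_) (Or.inl hl)
  rcases h z (List.mem_of_mem_tail hzp) (List.mem_of_mem_tail hzq) with rfl | rfl
  · exact (List.nodup_cons.1 (p.cons_tail_support.symm ▸ hp.support_nodup)).1 hzp
  · exact (List.nodup_cons.1 (q.cons_tail_support.symm ▸ hq.support_nodup)).1 hzq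

lemma exists_append_first_mem {X : Set V} (p : G.Walk u v) (h : ∃ z ∈ p.support, z ∈ X) :
    ∃ (z : V) (q : G.Walk u z) (r : G.Walk z v), p = q.append r ∧ z ∈ X ∧
      ∀ t ∈ q.support, t ∈ X → t = z := by
  classical
  obtain ⟨z, hzX, hz, hfirst⟩ := p.exists_mem_support_forall_mem_support_imp_eq
    {z ∈ p.support.toFinset | z ∈ X} (h.imp fun z hz ↦ by simpa using ⟨hz, hz.1⟩)
  refine ⟨z, p.takeUntil z hz, p.dropUntil z hz, (p.take_spec hz).symm,
    (Finset.mem_filter.1 hzX).2, fun t ht htX ↦ hfirst t ?_ ht⟩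
  simpa using ⟨p.support_takeUntil_subset_support hz ht, htX⟩

lemma exists_append_last_mem {X : Set V} (p : G.Walk u v) (h : ∃ z ∈ p.support, z ∈ X) :
    ∃ (z : V) (q : G.Walk u z) (r : G.Walk z v), p = q.append r ∧ z ∈ X ∧
      ∀ t ∈ r.support, t ∈ X → t = z := by
  obtain ⟨z, q, r, hp, hz, hq⟩ := exists_append_first_mem p.reverse (by simpa using h)
  refine ⟨z, r.reverse, q.reverse, ?_, hz, by simpa using hq⟩
  rw [← Walk.reverse_append, ← hp, Walk.reverse_reverse]

lemma exists_append_append_disjoint {X : Set V} {a b : V} {p : G.Walk u v} (hp : p.IsPath)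
    (ha : a ∈ p.support) (hb : b ∈ p.support) (haX : a ∈ X) (hbX : b ∈ X) (hab : a ≠ b) :
    ∃ (c d : V) (q : G.Walk u c) (m : G.Walk c d) (r : G.Walk d v), p = q.append (m.append r) ∧
      c ∈ X ∧ d ∈ X ∧ (∀ z ∈ q.support, z ∈ X → z = c) ∧ (∀ z ∈ r.support, z ∈ X → z = d) ∧
      ∀ z ∈ q.support, z ∉ r.support := by
  obtain ⟨c, q, t, rfl, hc, hqX⟩ := exists_append_first_mem p ⟨a, ha, haX⟩
  obtain ⟨d, m, r, rfl, hd, hrX⟩ := exists_append_last_mem t ⟨c, t.start_mem_support, hc⟩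
  obtain ⟨-, hmr, hqmr⟩ := isPath_append_iff.1 hp
  obtain ⟨hm, -, hmr⟩ := isPath_append_iff.1 hmr
  simp only [Walk.mem_support_append_iff] at ha hb hqmr
  have hcd : c ≠ d := by
    rintro rfl
    obtain rfl := Walk.eq_nil_iff_nil.2 (Walk.isPath_iff_nil.1 hm)
    have hX : ∀ z, z ∈ q.support ∨ z ∈ (Walk.nil : G.Walk c c).support ∨ z ∈ r.support →
        z ∈ X → z = c := by
      rintro z (hz | hz | hz) hzX
      exacts [hqX z hz hzX, by simpa using hz, hrX z hz hzX]
    exact hab ((hX a ha haX).trans (hX b hb hbX).symm)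
  refine ⟨c, d, q, m, r, rfl, hc, hd, hqX, hrX, fun z hzq hzr ↦ ?_⟩
  obtain rfl := hqmr z hzq (Or.inr hzr)
  exact hcd (hmr _ m.start_mem_support hzr)

lemma exists_isPath_append_forall_adj_mem [Finite V] {X : Set V} {u v : V} (p : G.Walk u v)
    (hp : p.IsPath) (hpX : ∀ z ∈ p.support, z ∈ X → z = u) :
    ∃ (y : V) (q : G.Walk v y), (p.append q).IsPath ∧
      (∀ z ∈ (p.append q).support, z ∈ X → z = u) ∧
      ∀ z, G.Adj y z → z ∈ X ∨ z ∈ (p.append q).support := by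
  by_cases! hext : ∃ z, G.Adj v z ∧ z ∉ X ∧ z ∉ p.support
  · obtain ⟨z, hvz, hzX, hzp⟩ := hext
    obtain ⟨y, q, hq⟩ := exists_isPath_append_forall_adj_mem (p.concat hvz) (hp.concat hzp hvz)
      (fun t ht htX ↦ by
        rw [Walk.support_concat, List.mem_append, List.mem_singleton] at ht
        exact ht.elim (hpX t · htX) fun htz ↦ absurd (htz ▸ htX) hzX)
    exact ⟨y, Walk.cons hvz q, by rwa [← Walk.concat_append]⟩
  · refine ⟨v, Walk.nil, ?_⟩
    rw [Walk.append_nil]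
    exact ⟨hp, hpX, fun z hz ↦ or_iff_not_imp_left.2 (hext z hz)⟩
termination_by Nat.card V - p.length
decreasing_by
  have := Fintype.ofFinite V
  have := (hp.concat hzp hvz).length_lt
  rw [Nat.card_eq_fintype_card]
  rw [Walk.length_concat] at this ⊢
  omega

lemma exists_isPath_forall_adj_mem_ends [Finite V] {X : Set V} (hadj : G.Adj u v) (hu : u ∉ X)
    (hv : v ∉ X) :
    ∃ (a b : V) (p : G.Walk a b), p.IsPath ∧ 1 ≤ p.length ∧ (∀ z ∈ p.support, z ∉ X) ∧
      (∀ z, G.Adj a z → z ∈ X ∨ z ∈ p.support) ∧ ∀ z, G.Adj b z → z ∈ X ∨ z ∈ p.support := by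
  obtain ⟨b, q, hp, hpX, hb⟩ := exists_isPath_append_forall_adj_mem (X := X) hadj.toWalk
    hadj.isPath_toWalk (by simp [hu, hv])
  set p := (hadj.toWalk.append q).reverse with hp_def
  have hpX' : ∀ z ∈ p.support, z ∉ X := fun z hz hzX ↦
    hu (hpX z (by rwa [hp_def, Walk.support_reverse, List.mem_reverse] at hz) hzX ▸ hzX)
  obtain ⟨a, r, hpr, hprX, ha⟩ := exists_isPath_append_forall_adj_mem (X := X) p hp.reverse
    fun z hz hzX ↦ absurd hzX (hpX' z hz)
  refine ⟨b, a, p.append r, hpr, ?_, fun z hz hzX ↦ ?_, fun z hz ↦ (hb z hz).imp_right ?_, ha⟩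
  · simp only [hp_def, Walk.length_append, Walk.length_reverse, Adj.length_toWalk]
    omega
  · exact hpX' b p.start_mem_support (hprX z hz hzX ▸ hzX)
  · exact fun hz ↦ (Walk.mem_support_append_iff _ _).2 <| Or.inl <| by
      rwa [hp_def, Walk.support_reverse, List.mem_reverse]

lemma degree_le_card_add_length [Fintype (G.neighborSet x)] {p : G.Walk u v} (hp : p.IsPath)
    (hx : x ∈ p.support) {A : Finset V} (hN : ∀ z, G.Adj x z → z ∈ A ∨ z ∈ p.support) :
    G.degree x ≤ A.card + p.length := by
  classical
  have hsub : G.neighborFinset x ⊆ A ∪ p.support.toFinset.erase x := fun z hz ↦ by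
    rw [mem_neighborFinset] at hz
    simpa [hz.ne'] using hN z hz
  have hpath : (p.support.toFinset.erase x).card = p.length := by
    rw [Finset.card_erase_of_mem (by simpa using hx), List.toFinset_card_of_nodup hp.support_nodup,
      Walk.length_support, Nat.add_sub_cancel]
  calc G.degree x = (G.neighborFinset x).card := (G.card_neighborFinset_eq_degree x).symm
    _ ≤ _ := Finset.card_le_card hsub
    _ ≤ _ := Finset.card_union_le _ _
    _ = _ := by rw [hpath]

/- With `t` the last neighbour of `v` before `z`, jump from `t` to `v` and walk back to `z`: the
vertices skipped are not neighbours of `v`. -/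
lemma exists_isPath_degree_le_length [Fintype (G.neighborSet v)] {p : G.Walk u v} (hp : p.IsPath)
    (huv : G.Adj u v) (hN : ∀ t, G.Adj v t → t ∈ p.support) {z : V} (hz : z ∈ p.support)
    (hzu : z ≠ u) :
    ∃ r : G.Walk u z, r.IsPath ∧ r.support ⊆ p.support ∧ G.degree v ≤ r.length := by
  obtain ⟨p₁, p₂, rfl⟩ := Walk.mem_support_iff_exists_append.1 hz
  obtain ⟨t, q, s, rfl, ⟨htv, htz⟩, hs⟩ := exists_append_last_mem (X := {t | G.Adj t v ∧ t ≠ z}) p₁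
    ⟨u, p₁.start_mem_support, huv, hzu.symm⟩
  obtain ⟨hqs, hp₂, hqsp₂⟩ := isPath_append_iff.1 hp
  obtain ⟨hq, -, hqs⟩ := isPath_append_iff.1 hqs
  simp only [Walk.mem_support_append_iff] at hN hqsp₂
  have hr : (q.append (Walk.cons htv p₂.reverse)).IsPath := by
    refine isPath_append_iff.2 ⟨hq, hp₂.reverse.cons fun ht ↦ htz ?_, fun y hyq hy ↦ ?_⟩
    · exact hqsp₂ t (Or.inl q.end_mem_support) (by simpa using ht)
    · rw [Walk.support_cons, List.mem_cons, Walk.support_reverse, List.mem_reverse] at hy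
      refine hy.elim id fun hy ↦ hqs y hyq ?_
      rw [hqsp₂ y (Or.inl hyq) hy]
      exact s.end_mem_support
  refine ⟨_, hr, fun y hy ↦ ?_, ?_⟩
  · simp only [Walk.mem_support_append_iff, Walk.support_cons, List.mem_cons, Walk.support_reverse,
      List.mem_reverse] at hy ⊢
    rcases hy with hy | rfl | hy
    exacts [Or.inl (Or.inl hy), Or.inl (Or.inl q.end_mem_support), Or.inr hy]
  · simpa using degree_le_card_add_length hr (x := v) (by simp) (A := ∅) fun y hy ↦ by
      simp only [Walk.mem_support_append_iff, Walk.support_cons, List.mem_cons,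
        Walk.support_reverse, List.mem_reverse, Finset.notMem_empty, false_or]
      rcases hN y hy with (hyq | hys) | hyp₂
      · exact Or.inl hyq
      · by_cases hyz : y = z
        · exact Or.inr (Or.inr (hyz ▸ p₂.start_mem_support))
        · exact Or.inr (Or.inl (hs y hys ⟨hy.symm, hyz⟩))
      · exact Or.inr (Or.inr hyp₂)

end Paths

section Ears

variable {G : SimpleGraph V} {Y : Set V} {a b u v x y z : V}

/-- `e` is an ear of the vertex set `Y`: a path joining two distinct vertices of `Y` with no inner
vertex in `Y`. A single edge between two vertices of `Y` counts as an ear. -/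
structure IsEar (e : G.Walk a b) (Y : Set V) : Prop where
  isPath : e.IsPath
  ne : a ≠ b
  start_mem : a ∈ Y
  end_mem : b ∈ Y
  eq_or_eq : ∀ z ∈ e.support, z ∈ Y → z = a ∨ z = b

lemma IsEar.reverse {e : G.Walk a b} (he : IsEar e Y) : IsEar e.reverse Y where
  isPath := he.isPath.reverse
  ne := he.ne.symm
  start_mem := he.end_mem
  end_mem := he.start_mem
  eq_or_eq z hz hzY := (he.eq_or_eq z (by simpa using hz) hzY).symm

lemma isEar_cons_concat {p : G.Walk x y} (hp : p.IsPath) (hpY : ∀ z ∈ p.support, z ∉ Y)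
    (ha : a ∈ Y) (hb : b ∈ Y) (hab : a ≠ b) (hax : G.Adj a x) (hyb : G.Adj y b) :
    IsEar (Walk.cons hax (p.concat hyb)) Y where
  isPath := by
    refine (hp.concat (hpY b · hb) hyb).cons fun h ↦ ?_
    rw [Walk.support_concat, List.mem_append, List.mem_singleton] at h
    exact h.elim (hpY a · ha) hab
  ne := hab
  start_mem := ha
  end_mem := hb
  eq_or_eq z hz hzY := by
    rw [Walk.support_cons, Walk.support_concat, List.mem_cons, List.mem_append,
      List.mem_singleton] at hz
    exact hz.imp_right fun h ↦ h.resolve_left (hpY z · hzY)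

lemma IsEar.detour {e₁ : G.Walk a u} {e₂ s : G.Walk u v} {e₃ : G.Walk v b}
    (he : IsEar (e₁.append (e₂.append e₃)) Y)
    (hs : IsEar s ({x | x ∈ (e₁.append (e₂.append e₃)).support} ∪ Y)) :
    IsEar (e₁.append (s.append e₃)) Y := by
  obtain ⟨he₁, he₂₃, h₁⟩ := isPath_append_iff.1 he.isPath
  obtain ⟨-, he₃, h₂⟩ := isPath_append_iff.1 he₂₃
  have hsY := hs.eq_or_eq
  have hY := he.eq_or_eq
  simp only [Walk.mem_support_append_iff, Set.mem_union, Set.mem_ofPred_eq] at h₁ hsY hY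
  refine ⟨isPath_append_iff.2 ⟨he₁, isPath_append_iff.2 ⟨hs.isPath, he₃, fun z hz hz₃ ↦ ?_⟩,
    fun z hz₁ hz ↦ ?_⟩, he.ne, he.start_mem, he.end_mem, fun z hz hzY ↦ ?_⟩
  · obtain rfl | rfl := hsY z hz (Or.inl (Or.inr (Or.inr hz₃)))
    exacts [h₂ _ e₂.start_mem_support hz₃, rfl]
  · rcases (Walk.mem_support_append_iff _ _).1 hz with hz | hz₃
    · obtain rfl | rfl := hsY z hz (Or.inl (Or.inl hz₁))
      exacts [rfl, h₁ _ hz₁ (Or.inr e₃.start_mem_support)]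
    · exact h₁ z hz₁ (Or.inr hz₃)
  · simp only [Walk.mem_support_append_iff] at hz
    rcases hz with hz | hz | hz
    · exact hY z (Or.inl hz) hzY
    · obtain rfl | rfl := hsY z hz (Or.inr hzY)
      exacts [hY _ (Or.inl e₁.end_mem_support) hzY,
        hY _ (Or.inr (Or.inr e₃.start_mem_support)) hzY]
    · exact hY z (Or.inr (Or.inr hz)) hzY

lemma IsEar.divert {e₁ : G.Walk a v} {e₂ : G.Walk v b} (he : IsEar (e₁.append e₂) Y) (hv : v ∉ Y)
    {s : G.Walk v z} (hs : IsEar s ({x | x ∈ (e₁.append e₂).support} ∪ Y))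
    (hz : z ∉ (e₁.append e₂).support) : IsEar (e₁.append s) Y := by
  obtain ⟨he₁, -, h₁⟩ := isPath_append_iff.1 he.isPath
  have hY := he.eq_or_eq
  have hsY := hs.eq_or_eq
  have hzY := hs.end_mem.resolve_left hz
  simp only [Walk.mem_support_append_iff, Set.mem_union, Set.mem_ofPred_eq, not_or] at hY hsY hz
  refine ⟨isPath_append_iff.2 ⟨he₁, hs.isPath, fun t ht₁ ht ↦ ?_⟩, ?_, he.start_mem, hzY,
    fun t ht htY ↦ ?_⟩
  · exact (hsY t ht (Or.inl (Or.inl ht₁))).resolve_right fun h ↦ hz.1 (h ▸ ht₁)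
  · exact fun h ↦ hz.1 (h ▸ e₁.start_mem_support)
  · rcases (Walk.mem_support_append_iff _ _).1 ht with ht₁ | ht
    · refine Or.inl ((hY t (Or.inl ht₁) htY).resolve_right fun htb ↦ hv ?_)
      exact h₁ t ht₁ (htb ▸ e₂.end_mem_support) ▸ htY
    · exact Or.inr ((hsY t ht (Or.inr htY)).resolve_left fun h ↦ hv (h ▸ htY))

lemma IsEar.exists_isEar_support_subset {e : G.Walk a b} (he : IsEar e Y) (hv : v ∈ e.support)
    (hvY : v ∉ Y) {s : G.Walk v z} (hs : IsEar s ({x | x ∈ e.support} ∪ Y)) :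
    ∃ (c : V) (f : G.Walk a c), IsEar f Y ∧ s.support ⊆ f.support := by
  obtain ⟨e₁, e₂, rfl⟩ := Walk.mem_support_iff_exists_append.1 hv
  by_cases hz₂ : z ∈ e₂.support
  · obtain ⟨f₁, f₂, rfl⟩ := Walk.mem_support_iff_exists_append.1 hz₂
    exact ⟨b, _, he.detour hs, fun t ht ↦ by simp [Walk.mem_support_append_iff, ht]⟩
  by_cases hz₁ : z ∈ e₁.support
  · obtain ⟨f₁, f₂, rfl⟩ := Walk.mem_support_iff_exists_append.1 hz₁
    rw [← Walk.append_assoc] at he hs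
    exact ⟨b, _, he.detour hs.reverse, fun t ht ↦ by simp [Walk.mem_support_append_iff, ht]⟩
  · have hz : z ∉ (e₁.append e₂).support := by simp [Walk.mem_support_append_iff, hz₁, hz₂]
    exact ⟨z, _, he.divert hvY hs hz, fun t ht ↦ by simp [Walk.mem_support_append_iff, ht]⟩

/- Cut `e` at its first and last vertices in `W` and join the two outer pieces by `l`. -/
lemma IsEar.exists_isEar_length_le {W : Set V} {e l : G.Walk u v} (he : IsEar e Y)
    (hl : l.IsPath) (hlY : ∀ z ∈ l.support, z ∈ Y)
    (hlW : ∀ z ∈ l.support, z ∈ W → z = u ∨ z = v) (ha : a ∈ e.support) (hb : b ∈ e.support)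
    (haW : a ∈ W) (hbW : b ∈ W) (hab : a ≠ b) :
    ∃ (c c' : V) (f : G.Walk c c'), IsEar f W ∧ l.length ≤ f.length := by
  obtain ⟨c, c', e₁, m, e₂, rfl, hc, hc', h₁, h₂, hdisj⟩ :=
    exists_append_append_disjoint he.isPath ha hb haW hbW hab
  have he₁ := he.isPath.of_append_left
  have he₂ := he.isPath.of_append_right.of_append_right
  have hY := he.eq_or_eq
  simp only [Walk.mem_support_append_iff] at hY
  refine ⟨c, c', e₁.reverse.append (l.append e₂.reverse),
    ⟨isPath_append_iff.2 ⟨he₁.reverse, isPath_append_iff.2 ⟨hl, he₂.reverse, fun z hz hz₂ ↦ ?_⟩,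
      fun z hz₁ hz ↦ ?_⟩, fun hcc' ↦ ?_, hc, hc', fun z hz hzW ↦ ?_⟩, ?_⟩
  · rw [Walk.support_reverse, List.mem_reverse] at hz₂
    refine (hY z (Or.inr (Or.inr hz₂)) (hlY z hz)).resolve_left ?_
    rintro rfl
    exact hdisj _ e₁.start_mem_support hz₂
  · simp only [Walk.mem_support_append_iff, Walk.support_reverse, List.mem_reverse] at hz₁ hz
    rcases hz with hz | hz₂
    · refine (hY z (Or.inl hz₁) (hlY z hz)).resolve_right ?_
      rintro rfl
      exact hdisj _ hz₁ e₂.end_mem_support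
    · exact absurd hz₂ (hdisj z hz₁)
  · exact hdisj c e₁.end_mem_support (hcc' ▸ e₂.start_mem_support)
  · simp only [Walk.mem_support_append_iff, Walk.support_reverse, List.mem_reverse] at hz
    rcases hz with hz | hz | hz
    · exact Or.inl (h₁ z hz hzW)
    · obtain rfl | rfl := hlW z hz hzW
      exacts [Or.inl (h₁ _ e₁.start_mem_support hzW), Or.inr (h₂ _ e₂.end_mem_support hzW)]
    · exact Or.inr (h₂ z hz hzW)
  · simp only [Walk.length_append]
    omega

end Ears

section NoCutVertex

variable {G : SimpleGraph V} {X Y : Set V} {d v v' x y : V}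

/-- `G` has no cut vertex: deleting any one vertex leaves a graph in which any two vertices are
joined by a walk. Expressed by walks of `G` avoiding the vertex, so that no induced subgraph is
needed. -/
def NoCutVertex (G : SimpleGraph V) : Prop :=
  ∀ s a b : V, a ≠ s → b ≠ s → ∃ p : G.Walk a b, s ∉ p.support

lemma KConnected.noCutVertex [Fintype V] (h : KConnected G 2) : NoCutVertex G := by
  intro s a b ha hb
  obtain ⟨p⟩ := (h.2 {s} (by simp)).preconnected ⟨a, by simpa using ha⟩ ⟨b, by simpa using hb⟩
  refine ⟨p.map (Embedding.induce _).toHom, fun hs ↦ ?_⟩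
  obtain ⟨⟨x, hx⟩, -, hxs⟩ := List.mem_map.1 (Walk.support_map .. ▸ hs)
  exact hx (by simpa using hxs)

lemma NoCutVertex.exists_isPath_first_mem (h : NoCutVertex G) (hxv : x ≠ v) (hyv : y ≠ v)
    (hy : y ∈ X) :
    ∃ (z : V) (q : G.Walk x z), q.IsPath ∧ v ∉ q.support ∧ z ∈ X ∧
      ∀ t ∈ q.support, t ∈ X → t = z := by
  classical
  obtain ⟨p, hp⟩ := h v x y hxv hyv
  obtain ⟨z, q, r, hqr, hz, hq⟩ := exists_append_first_mem p.bypass ⟨y, Walk.end_mem_support _, hy⟩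
  have hpath : (q.append r).IsPath := hqr ▸ p.bypass_isPath
  refine ⟨z, q, hpath.of_append_left, fun hv ↦ hp (p.support_bypass_subset_support ?_), hz, hq⟩
  rw [hqr, Walk.mem_support_append_iff]
  exact Or.inl hv

lemma NoCutVertex.exists_isEar_of_adj (h : NoCutVertex G) (hv : v ∈ X) (hy : y ∈ X) (hyv : y ≠ v)
    (hadj : G.Adj v v') : ∃ (z : V) (s : G.Walk v z), IsEar s X ∧ v' ∈ s.support := by
  obtain ⟨z, q, hq, hvq, hz, hqX⟩ := h.exists_isPath_first_mem hadj.ne' hyv hy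
  refine ⟨z, Walk.cons hadj q, ⟨hq.cons hvq, fun hvz ↦ hvq (hvz ▸ q.end_mem_support), hv, hz,
    fun t ht htX ↦ ?_⟩, by simp⟩
  exact (List.mem_cons.1 ht).imp_right (hqX t · htX)

/- Walk towards `d` from `v`: by induction some ear uses the next edge of the walk and so contains
`v`; an ear of its union with `Y` that starts with the edge from `v` to `v'` reroutes it. -/
lemma NoCutVertex.exists_isEar_mem_mem (h : NoCutVertex G) (hd : d ∈ Y) (hy : y ∈ Y)
    (hyd : y ≠ d) (q : G.Walk v d) (hqY : ∀ z ∈ q.support, z ∈ Y → z = d) (hadj : G.Adj v v') :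
    ∃ (z : V) (e : G.Walk d z), IsEar e Y ∧ v ∈ e.support ∧ v' ∈ e.support := by
  induction q generalizing v' with
  | nil =>
    obtain ⟨z, s, hs, hv's⟩ := h.exists_isEar_of_adj hd hy hyd hadj
    exact ⟨z, s, hs, s.start_mem_support, hv's⟩
  | @cons v u d hvu q ih =>
    by_cases hv : v ∈ Y
    · obtain rfl := hqY v (Walk.start_mem_support _) hv
      obtain ⟨z, s, hs, hv's⟩ := h.exists_isEar_of_adj hd hy hyd hadj
      exact ⟨z, s, hs, s.start_mem_support, hv's⟩
    · obtain ⟨z, e, he, -, hve⟩ :=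
        ih hd hyd (fun t ht ↦ hqY t (List.mem_cons_of_mem _ ht)) hvu.symm
      obtain ⟨c, s, hs, hv's⟩ := h.exists_isEar_of_adj (X := {t | t ∈ e.support} ∪ Y)
        (Or.inl hve) (Or.inr hd) (ne_of_mem_of_not_mem hd hv) hadj
      obtain ⟨z', f, hf, hsf⟩ := he.exists_isEar_support_subset hve hv hs
      exact ⟨z', f, hf, hsf s.start_mem_support, hsf hv's⟩

end NoCutVertex

section CyclePositions

variable {A B : Finset ℕ} {c k s t : ℕ}

lemma card_union_image_add_one_union_image_add_two (hA : ∀ a ∈ A, a + 1 ∉ A)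
    (hBA : ∀ a ∈ A, ∀ b ∈ B, b < a → b + 3 ≤ a) :
    (A ∪ A.image (· + 1) ∪ B.image (· + 2)).card = 2 * A.card + B.card := by
  rw [Finset.card_union_of_disjoint, Finset.card_union_of_disjoint,
    Finset.card_image_of_injective _ (add_left_injective 1),
    Finset.card_image_of_injective _ (add_left_injective 2), two_mul]
  · rw [Finset.disjoint_right]
    exact Finset.forall_mem_image.2 hA
  · rw [Finset.disjoint_right]
    refine Finset.forall_mem_image.2 fun b hb h ↦ ?_
    rcases Finset.mem_union.1 h with h | h
    · have := hBA _ h b hb (by omega)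
      omega
    · obtain ⟨a, ha, hab⟩ := Finset.mem_image.1 h
      have := hBA a ha b hb (by omega)
      omega

/- The `k - 1` positions after each of `s + 2` and `t + 2` remain free. -/
lemma two_mul_card_add_card_add_le_of_gaps (hA : ∀ a ∈ A, a + 1 ∉ A)
    (hBA : ∀ a ∈ A, ∀ b ∈ B, b < a → b + 3 ≤ a) (hAc : ∀ a ∈ A, a + 2 ≤ c)
    (hBc : ∀ b ∈ B, b + 3 ≤ c) (hst : s + k + 2 ≤ t) (htc : t + k + 2 ≤ c)
    (hs : ∀ y ∈ A ∪ B, s < y → s + k + 2 ≤ y) (ht : ∀ y ∈ A ∪ B, t < y → t + k + 2 ≤ y) :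
    2 * A.card + B.card + 2 * (k - 1) ≤ c := by
  set S := A ∪ A.image (· + 1) ∪ B.image (· + 2) with hS
  have mem_S : ∀ z ∈ S, ∃ y ∈ A ∪ B, y ≤ z ∧ z ≤ y + 2 ∧ z < c := by
    simp only [hS, Finset.mem_union, Finset.mem_image]
    rintro z ((hz | ⟨y, hy, rfl⟩) | ⟨y, hy, rfl⟩)
    · exact ⟨z, Or.inl hz, by have := hAc z hz; omega⟩
    · exact ⟨y, Or.inl hy, by have := hAc y hy; omega⟩
    · exact ⟨y, Or.inr hy, by have := hBc y hy; omega⟩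
  have hdisj : ∀ r, (∀ y ∈ A ∪ B, r < y → r + k + 2 ≤ y) →
      Disjoint S (Finset.Ico (r + 3) (r + k + 2)) := fun r hr ↦ by
    refine Finset.disjoint_left.2 fun z hz hz' ↦ ?_
    obtain ⟨y, hy, hyz, hzy, -⟩ := mem_S z hz
    rw [Finset.mem_Ico] at hz'
    have := hr y hy (by omega)
    omega
  have hIco : Disjoint (Finset.Ico (s + 3) (s + k + 2)) (Finset.Ico (t + 3) (t + k + 2)) :=
    Finset.disjoint_left.2 fun z hz hz' ↦ by
      rw [Finset.mem_Ico] at hz hz'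
      omega
  have hsub : S ∪ Finset.Ico (s + 3) (s + k + 2) ∪ Finset.Ico (t + 3) (t + k + 2) ⊆
      Finset.range c := fun z hz ↦ by
    simp only [Finset.mem_union, Finset.mem_Ico, Finset.mem_range] at hz ⊢
    rcases hz with (hz | hz) | hz
    · obtain ⟨-, -, -, -, hzc⟩ := mem_S z hz
      exact hzc
    all_goals omega
  have hcard := Finset.card_le_card hsub
  rw [Finset.card_union_of_disjoint (Finset.disjoint_union_left.2 ⟨hdisj t ht, hIco⟩),
    Finset.card_union_of_disjoint (hdisj s hs), hS,
    card_union_image_add_one_union_image_add_two hA hBA, Nat.card_Ico, Nat.card_Ico,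
    Finset.card_range] at hcard
  omega

/- Going around the cycle, `A` is left towards `B` and `B` is left towards `A` at least once each,
and at both places a gap of length `k + 2` occurs. -/
lemma two_mul_card_add_card_add_le (hk : 1 ≤ k) (h0 : 0 ∈ A) (hA : ∀ a ∈ A, a + 1 ∉ A)
    (hAc : ∀ a ∈ A, a + 2 ≤ c) (hBc : ∀ b ∈ B, b ≠ 0 → b + k + 2 ≤ c)
    (hAB : ∀ a ∈ A, ∀ b ∈ B, a < b → a + k + 2 ≤ b)
    (hBA : ∀ a ∈ A, ∀ b ∈ B, b < a → b + k + 2 ≤ a) (hB : ∃ b ∈ B, b ≠ 0) :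
    2 * A.card + B.card + 2 * (k - 1) ≤ c := by
  obtain ⟨m, hm, hmin⟩ := Finset.exists_min_image {b ∈ B | b ≠ 0} id
    (by simpa [Finset.Nonempty] using hB)
  simp only [Finset.mem_filter, id_eq, and_imp] at hm hmin
  obtain ⟨t, ht, hmax⟩ := Finset.exists_max_image B id ⟨m, hm.1⟩
  obtain ⟨s, hs, hsmax⟩ := Finset.exists_max_image {a ∈ A | a < m} id
    ⟨0, Finset.mem_filter.2 ⟨h0, Nat.pos_of_ne_zero hm.2⟩⟩
  simp only [Finset.mem_filter, id_eq, and_imp] at hs hsmax hmax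
  have hsm : s + k + 2 ≤ m := hAB s hs.1 m hm.1 hs.2
  have hmt : m ≤ t := hmax m hm.1
  have htc : t + k + 2 ≤ c := hBc t ht (by omega)
  refine two_mul_card_add_card_add_le_of_gaps (s := s) (t := t) hA (fun a ha b hb hba ↦ ?_) hAc
    (fun b hb ↦ ?_) (by omega) htc (fun y hy hsy ↦ ?_) fun y hy hty ↦ ?_
  · have := hBA a ha b hb hba
    omega
  · have := hmax b hb
    omega
  · suffices m ≤ y by omega
    rcases Finset.mem_union.1 hy with hy | hy
    · exact not_lt.1 fun hym ↦ hsy.not_ge (hsmax y hy hym)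
    · exact hmin y hy (by omega)
  · rcases Finset.mem_union.1 hy with hy | hy
    · exact hBA y hy t ht hty
    · exact absurd (hmax y hy) (by omega)

end CyclePositions

section Cycles

variable {G : SimpleGraph V} {v a b x y : V} {w : G.Walk v v} {i j : ℕ}

lemma getVert_ne_getVert (hw : w.IsCycle) (hij : i < j) (hj : j ≤ w.length)
    (h : 0 < i ∨ j < w.length) : w.getVert i ≠ w.getVert j := by
  intro heq
  rcases h with h | h
  · exact hij.ne (hw.getVert_injOn ⟨h, by omega⟩ ⟨by omega, hj⟩ heq)
  · exact hij.ne (hw.getVert_injOn' (Nat.le_sub_one_of_lt (by omega)) (Nat.le_sub_one_of_lt h) heq)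

lemma exists_getVert_eq_of_mem_support (hw : w.IsCycle) (ha : a ∈ w.support) :
    ∃ i < w.length, w.getVert i = a := by
  obtain ⟨i, rfl, hi⟩ := Walk.mem_support_iff_exists_getVert.1 ha
  rcases hi.lt_or_eq with hi | rfl
  · exact ⟨i, hi, rfl⟩
  · exact ⟨0, by have := hw.three_le_length; omega, by simp⟩

lemma isPath_drop_append_take (hw : w.IsCycle) (hij : i < j) (hj : j ≤ w.length) :
    ((w.drop j).append (w.take i)).IsPath := by
  refine isPath_append_iff.2 ⟨hw.isPath_drop (by omega), hw.isPath_take (by omega),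
    fun z hzj hzi ↦ ?_⟩
  obtain ⟨n, rfl, hn⟩ := Walk.mem_support_iff_exists_getVert.1 hzj
  obtain ⟨m, hmn, hm⟩ := Walk.mem_support_iff_exists_getVert.1 hzi
  rw [Walk.take_getVert, Walk.drop_getVert] at hmn
  rw [Walk.take_length] at hm
  rw [Walk.drop_length] at hn
  rw [Walk.drop_getVert]
  by_contra hne
  refine getVert_ne_getVert hw (by omega) (by omega) ?_ hmn
  by_contra! h
  exact hne (by rw [show j + n = w.length by omega, Walk.getVert_length])

lemma length_add_length_lt_card [Fintype V] (hw : w.IsCycle) {p : G.Walk x y} (hp : p.IsPath)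
    (hpw : ∀ z ∈ p.support, z ∉ w.support) : w.length + p.length < Fintype.card V := by
  have hnd : (w.support.tail ++ p.support).Nodup :=
    List.nodup_append'.2 ⟨hw.support_nodup, hp.support_nodup,
      fun z hz hzp ↦ hpw z hzp (List.mem_of_mem_tail hz)⟩
  have := hnd.length_le_card
  rw [List.length_append, List.length_tail, Walk.length_support, Walk.length_support] at this
  omega

lemma IsLongestCycle.rotate [DecidableEq V] (hw : IsLongestCycle w) (ha : a ∈ w.support) :
    IsLongestCycle (w.rotate a ha) :=
  ⟨hw.1.rotate ha, fun u c hc ↦ (hw.2 u c hc).trans_eq (w.length_rotate a ha).symm⟩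

/- The ear cannot be longer than the arc of `w` that it bypasses. -/
lemma IsLongestCycle.add_length_le (hw : IsLongestCycle w) {e : G.Walk a b}
    (he : IsEar e {z | z ∈ w.support}) (hl : 1 < e.length) (hij : i < j) (hj : j ≤ w.length)
    (hi : w.getVert i = a) (hj' : w.getVert j = b) : i + e.length ≤ j := by
  subst hi hj'
  have hsub : ∀ z ∈ ((w.drop j).append (w.take i)).support, z ∈ w.support := fun z hz ↦ by
    rcases (Walk.mem_support_append_iff _ _).1 hz with hz | hz
    · rw [← w.append_take_drop_eq j]
      exact (Walk.mem_support_append_iff _ _).2 (Or.inr hz)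
    · rw [← w.append_take_drop_eq i]
      exact (Walk.mem_support_append_iff _ _).2 (Or.inl hz)
  have hcycle := isCycle_append he.isPath (isPath_drop_append_take hw.1 hij hj) hl
    fun z hz hzw ↦ he.eq_or_eq z hz (hsub z hzw)
  have := hw.2 _ _ hcycle
  simp only [Walk.length_append, Walk.drop_length, Walk.take_length] at this
  omega

lemma IsLongestCycle.two_mul_length_le (hw : IsLongestCycle w) {e : G.Walk a b}
    (he : IsEar e {z | z ∈ w.support}) (hl : 1 < e.length) : 2 * e.length ≤ w.length := by
  classical
  have ha : a ∈ w.support := he.start_mem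
  have hw' := hw.rotate ha
  have he' : IsEar e {z | z ∈ (w.rotate a ha).support} := by
    simpa only [w.mem_support_rotate_iff a ha] using he
  obtain ⟨j, hjb, hj⟩ := Walk.mem_support_iff_exists_getVert.1 he'.end_mem
  have hj₀ : j ≠ 0 := by
    rintro rfl
    exact he.ne (by rw [← hjb, Walk.getVert_zero])
  have hj₁ : j ≠ (w.rotate a ha).length := by
    rintro rfl
    exact he.ne (by rw [← hjb, Walk.getVert_length])
  have h₁ := hw'.add_length_le he' hl (Nat.pos_of_ne_zero hj₀) hj (Walk.getVert_zero _) hjb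
  have h₂ := hw'.add_length_le he'.reverse (by simpa using hl) (hj.lt_of_ne hj₁) le_rfl hjb
    (Walk.getVert_length _)
  rw [Walk.length_rotate, Walk.length_reverse] at h₂
  omega

lemma IsLongestCycle.add_length_add_two_le (hw : IsLongestCycle w) {p : G.Walk x y}
    (hp : p.IsPath) (hpw : ∀ z ∈ p.support, z ∉ w.support) (hij : i < j) (hj : j ≤ w.length)
    (h : 0 < i ∨ j < w.length) (hxi : G.Adj x (w.getVert i)) (hyj : G.Adj y (w.getVert j)) :
    i + p.length + 2 ≤ j := by
  have he := isEar_cons_concat (Y := {z | z ∈ w.support}) hp hpw (w.getVert_mem_support i)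
    (w.getVert_mem_support j) (getVert_ne_getVert hw.1 hij hj h) hxi.symm hyj
  have := hw.add_length_le he (by simp) hij hj rfl rfl
  rw [Walk.length_cons, Walk.length_concat] at this
  omega

lemma card_le_card_filter_getVert_mem [DecidableEq V] (hw : w.IsCycle) {A : Finset V}
    (hA : ∀ a ∈ A, a ∈ w.support) :
    A.card ≤ {i ∈ Finset.range w.length | w.getVert i ∈ A}.card := by
  refine (Finset.card_le_card fun a ha ↦ ?_).trans (Finset.card_image_le (f := w.getVert))
  obtain ⟨i, hi, rfl⟩ := exists_getVert_eq_of_mem_support hw (hA a ha)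
  exact Finset.mem_image_of_mem _ (Finset.mem_filter.2 ⟨Finset.mem_range.2 hi, ha⟩)

lemma IsLongestCycle.two_mul_card_add_card_add_le_of_start_mem (hw : IsLongestCycle w)
    {p : G.Walk x y} (hp : p.IsPath) (hpw : ∀ z ∈ p.support, z ∉ w.support) (hl : 1 ≤ p.length)
    {A B : Finset V} (hA : ∀ a ∈ A, a ∈ w.support ∧ G.Adj x a)
    (hB : ∀ b ∈ B, b ∈ w.support ∧ G.Adj y b) (hv : v ∈ A) (hb : b ∈ B) (hbv : b ≠ v) :
    2 * A.card + B.card + 2 * (p.length - 1) ≤ w.length := by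
  classical
  have hx : ∀ z ∈ (Walk.nil : G.Walk x x).support, z ∉ w.support := by
    simpa using hpw x p.start_mem_support
  have hpw' : ∀ z ∈ p.reverse.support, z ∉ w.support := by simpa using hpw
  have hend : w.getVert w.length ∈ A := by rwa [Walk.getVert_length]
  have h3 := hw.1.three_le_length
  refine le_trans ?_ (two_mul_card_add_card_add_le hl
    (A := {i ∈ Finset.range w.length | w.getVert i ∈ A})
    (B := {i ∈ Finset.range w.length | w.getVert i ∈ B}) ?_ ?_ ?_ ?_ ?_ ?_ ?_)
  · gcongr
    exacts [card_le_card_filter_getVert_mem hw.1 fun a ha ↦ (hA a ha).1,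
      card_le_card_filter_getVert_mem hw.1 fun b hb ↦ (hB b hb).1]
  all_goals simp only [Finset.mem_filter, Finset.mem_range, and_imp]
  · exact ⟨by omega, by rwa [Walk.getVert_zero]⟩
  · rintro i - hiA ⟨hi', hiA'⟩
    have := hw.add_length_add_two_le .nil hx i.lt_succ_self hi'.le (Or.inr hi') (hA _ hiA).2
      (hA _ hiA').2
    rw [Walk.length_nil] at this
    omega
  · intro i hi hiA
    rcases i.eq_zero_or_pos with rfl | hi₀
    · omega
    · exact hw.add_length_add_two_le .nil hx hi le_rfl (Or.inl hi₀) (hA _ hiA).2 (hA _ hend).2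
  · intro i hi hiB hi₀
    simpa using hw.add_length_add_two_le hp.reverse hpw' hi le_rfl (Or.inl (by omega))
      (hB _ hiB).2 (hA _ hend).2
  · intro i _ hiA j hj hjB hij
    exact hw.add_length_add_two_le hp hpw hij hj.le (Or.inr hj) (hA _ hiA).2 (hB _ hjB).2
  · intro i hi hiA j _ hjB hji
    simpa using hw.add_length_add_two_le hp.reverse hpw' hji hi.le (Or.inr hi) (hB _ hjB).2
      (hA _ hiA).2
  · obtain ⟨i, hi, rfl⟩ := exists_getVert_eq_of_mem_support hw.1 (hB b hb).1
    refine ⟨i, ⟨hi, hb⟩, ?_⟩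
    rintro rfl
    exact hbv w.getVert_zero

lemma IsLongestCycle.two_mul_card_add_card_add_le (hw : IsLongestCycle w) {p : G.Walk x y}
    (hp : p.IsPath) (hpw : ∀ z ∈ p.support, z ∉ w.support) (hl : 1 ≤ p.length) {A B : Finset V}
    (hA : ∀ a ∈ A, a ∈ w.support ∧ G.Adj x a) (hB : ∀ b ∈ B, b ∈ w.support ∧ G.Adj y b)
    (ha : a ∈ A) (hb : b ∈ B) (hab : a ≠ b) :
    2 * A.card + B.card + 2 * (p.length - 1) ≤ w.length := by
  classical
  have haw := (hA a ha).1
  simp_rw [← w.mem_support_rotate_iff a haw] at hpw hA hB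
  simpa using (hw.rotate haw).two_mul_card_add_card_add_le_of_start_mem hp hpw hl hA hB ha hb
    hab.symm

end Cycles

section MinDegree

variable {G : SimpleGraph V} {v a b x y : V} {w : G.Walk v v}

lemma IsLongestCycle.two_mul_degree_le (hw : IsLongestCycle w) (h : NoCutVertex G)
    (ha : a ∈ w.support) {p : G.Walk a y} (hp : p.IsPath)
    (hpw : ∀ z ∈ p.support, z ∈ w.support → z = a) (hN : ∀ z, G.Adj y z → z ∈ p.support)
    [Fintype (G.neighborSet y)] (hdeg : 2 ≤ G.degree y) : 2 * G.degree y ≤ w.length := by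
  classical
  obtain ⟨z, hz⟩ := (G.degree_pos_iff_exists_adj y).1 (by omega)
  obtain ⟨d, p₁, p₂, rfl, hdy, hp₁⟩ := exists_append_first_mem (X := {z | G.Adj z y}) p
    ⟨z, hN z hz, hz.symm⟩
  obtain ⟨-, hp₂, hp₁₂⟩ := isPath_append_iff.1 hp
  simp only [Walk.mem_support_append_iff] at hpw hN
  obtain ⟨b, hab, hb⟩ : ∃ b, G.Adj a b ∧ b ∈ w.support := by
    refine ⟨_, (w.rotate a ha).adj_snd (hw.1.rotate ha).not_nil, ?_⟩
    rw [← w.mem_support_rotate_iff a ha]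
    exact Walk.getVert_mem_support _ _
  obtain ⟨y', e, he, hae, hbe⟩ := h.exists_isEar_mem_mem (Y := {z | z ∈ p₂.support})
    p₂.start_mem_support p₂.end_mem_support hdy.ne' p₁ hp₁₂ hab
  have hN₂ : ∀ t, G.Adj y t → t ∈ p₂.support := fun t ht ↦ (hN t ht).elim
    (fun ht₁ ↦ hp₁ t ht₁ ht.symm ▸ p₂.start_mem_support) id
  obtain ⟨l, hl, hlp, hlen⟩ := exists_isPath_degree_le_length hp₂ hdy hN₂ he.end_mem he.ne.symm
  have hlw : ∀ t ∈ l.support, t ∈ w.support → t = d ∨ t = y' := fun t ht htw ↦ by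
    obtain rfl := hpw t (Or.inr (hlp ht)) htw
    exact Or.inl (hp₁₂ _ p₁.start_mem_support (hlp ht))
  obtain ⟨c, c', f, hf, hlf⟩ := he.exists_isEar_length_le (W := {z | z ∈ w.support}) hl
    (fun t ht ↦ hlp ht) hlw hae hbe ha hb hab.ne
  have := hw.two_mul_length_le hf (by omega)
  omega

lemma IsLongestCycle.two_mul_degree_le_add_one (hw : IsLongestCycle w) (ha : a ∈ w.support)
    {p : G.Walk a y} (hp : p.IsPath) (hpw : ∀ z ∈ p.support, z ∈ w.support → z = a)
    (hl : 2 ≤ p.length) (hN : ∀ z, G.Adj y z → z ∈ w.support ∨ z ∈ p.support)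
    (hb : b ∈ w.support) (hyb : G.Adj y b) (hba : b ≠ a) [Fintype (G.neighborSet y)] :
    2 * G.degree y ≤ w.length + 1 := by
  classical
  have hay : a ≠ y := by
    rintro rfl
    rw [Walk.length_eq_zero_iff.2 (Walk.isPath_iff_nil.1 hp)] at hl
    omega
  obtain ⟨u, hau, q, rfl⟩ := p.exists_eq_cons_of_ne hay
  rw [Walk.length_cons] at hl
  rw [Walk.cons_isPath_iff] at hp
  simp only [Walk.support_cons, List.mem_cons] at hpw hN
  have hqw : ∀ z ∈ q.reverse.support, z ∉ w.support := fun z hz hzw ↦ by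
    rw [Walk.support_reverse, List.mem_reverse] at hz
    exact hp.2 (hpw z (Or.inr hz) hzw ▸ hz)
  set A := {z ∈ G.neighborFinset y | z ∈ w.support} with hA
  have hcount := hw.two_mul_card_add_card_add_le hp.1.reverse hqw
    (by rw [Walk.length_reverse]; omega) (A := A) (B := {a}) (by simp +contextual [hA])
    (by simp [ha, hau.symm]) (by simp [hA, hb, hyb]) (Finset.mem_singleton_self a) hba
  have hdeg : G.degree y ≤ A.card + q.length :=
    degree_le_card_add_length hp.1 q.end_mem_support fun z hz ↦ by
      rcases hN z hz with hzw | rfl | hzq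
      exacts [Or.inl (by simpa [hA] using ⟨hz, hzw⟩), Or.inl (by simpa [hA] using ⟨hz, ha⟩),
        Or.inr hzq]
  rw [Finset.card_singleton, Walk.length_reverse] at hcount
  omega

variable [Fintype V] [DecidableRel G.Adj]

lemma IsLongestCycle.length_add_two_le (hw : IsLongestCycle w)
    (hδ : Fintype.card V + 2 ≤ 3 * G.minDegree) (hadj : G.Adj x y) (hx : x ∉ w.support)
    (hy : y ∉ w.support) : w.length + 2 ≤ 2 * G.minDegree := by
  classical
  obtain ⟨x, y, p, hp, hl, hpw, hxN, hyN⟩ :=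
    exists_isPath_forall_adj_mem_ends (X := {z | z ∈ w.support}) hadj hx hy
  set A := {z ∈ G.neighborFinset x | z ∈ w.support} with hA
  set B := {z ∈ G.neighborFinset y | z ∈ w.support} with hB
  have hAd : G.minDegree ≤ A.card + p.length := (G.minDegree_le_degree x).trans
    (degree_le_card_add_length hp p.start_mem_support fun z hz ↦
      (hxN z hz).imp_left fun hzw ↦ by simpa [hA] using ⟨hz, hzw⟩)
  have hBd : G.minDegree ≤ B.card + p.length := (G.minDegree_le_degree y).trans
    (degree_le_card_add_length hp p.end_mem_support fun z hz ↦
      (hyN z hz).imp_left fun hzw ↦ by simpa [hB] using ⟨hz, hzw⟩)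
  have hn := length_add_length_lt_card hw.1 hp hpw
  by_contra! hlt
  obtain ⟨a, ha⟩ := Finset.card_pos.1 (show 0 < A.card by omega)
  obtain ⟨b, hb, hba⟩ := Finset.exists_mem_ne (show 1 < B.card by omega) a
  have := hw.two_mul_card_add_card_add_le hp hpw hl (A := A) (B := B) (by simp +contextual [hA])
    (by simp +contextual [hB]) ha hb hba.symm
  omega

lemma IsLongestCycle.two_mul_minDegree_le (hw : IsLongestCycle w) (h : NoCutVertex G)
    (hδ : 2 ≤ G.minDegree) (hadj : G.Adj x y) (hx : x ∉ w.support) (hy : y ∉ w.support) :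
    2 * G.minDegree ≤ w.length + 1 := by
  obtain ⟨a, q, hq, hyq, ha, hqw⟩ := h.exists_isPath_first_mem (X := {z | z ∈ w.support}) hadj.ne
    (ne_of_mem_of_not_mem w.start_mem_support hy) w.start_mem_support
  have hxa : x ≠ a := (ne_of_mem_of_not_mem ha hx).symm
  have hq₀ : q.length ≠ 0 := fun h₀ ↦ hxa (Walk.eq_of_length_eq_zero h₀)
  obtain ⟨y, r, hp, hpw, hN⟩ := exists_isPath_append_forall_adj_mem (X := {z | z ∈ w.support})
    (q.reverse.concat hadj) (hq.reverse.concat (by simpa using hyq) hadj) fun z hz hzw ↦ by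
      rw [Walk.support_concat, List.mem_append, Walk.support_reverse, List.mem_reverse,
        List.mem_singleton] at hz
      exact hz.elim (hqw z · hzw) fun hzy ↦ absurd hzy (ne_of_mem_of_not_mem hzw hy)
  have hdeg := G.minDegree_le_degree y
  by_cases hb : ∃ b, G.Adj y b ∧ b ∈ w.support ∧ b ≠ a
  · obtain ⟨b, hyb, hbw, hba⟩ := hb
    have := hw.two_mul_degree_le_add_one ha hp hpw
      (by rw [Walk.length_append, Walk.length_concat, Walk.length_reverse]; omega) hN hbw hyb hba
    omega
  · push Not at hb
    have := hw.two_mul_degree_le h ha hp hpw (fun z hz ↦ (hN z hz).elim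
      (fun hzw ↦ by rw [hb z hz hzw]; exact Walk.start_mem_support _) id) (by omega)
    omega

end MinDegree

theorem nashWilliams_dominating (G : SimpleGraph V) [Fintype V] [DecidableRel G.Adj]
    (h2 : KConnected G 2)
    (hδ : (G.minDegree : ℝ) ≥ (Fintype.card V + 2 : ℝ) / 3) :
    ∀ (v : V) (w : G.Walk v v), IsLongestCycle w → IsDominatingCycle w := by
  intro v w hw
  refine ⟨hw.1, fun x y hadj ↦ ?_⟩
  by_contra! h
  have hδ' : Fintype.card V + 2 ≤ 3 * G.minDegree := by
    have : (Fintype.card V + 2 : ℝ) ≤ 3 * G.minDegree := by linarith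
    exact_mod_cast this
  have hcard := h2.1
  have hupper := hw.length_add_two_le hδ' hadj h.1 h.2
  have hlower := hw.two_mul_minDegree_le h2.noCutVertex (by omega) hadj h.1 h.2
  omega
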